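/- Let (x,y) be an N-position of WYT(a,b) with x ≤ y, and write y − x = aℓ + r with integers ℓ ≥ 0 and 0 ≤ r < a. Then every diagonal move from (x,y) to a P-position lands in (x_ℓ, y_ℓ) or (x_{ℓ+1}, y_{ℓ+1}); in particular, at most two P-positions are reachable from (x,y) by diagonal moves. -/

import Mathlib

/-- A move of the game WYT(a,b): reduce `x` by `ε` and `y` by `δ` with
`0 ≤ ε ≤ x`, `0 ≤ δ ≤ y`, `ε + δ > 0`, and `|ε - δ| < a` or `min(ε,δ) < b`. -/
def WytMove (a b : ℕ) (p q : ℕ × ℕ) : Prop :=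
  q.1 ≤ p.1 ∧ q.2 ≤ p.2 ∧ q ≠ p ∧
    ((((p.1 - q.1 : ℕ) : ℤ) - ((p.2 - q.2 : ℕ) : ℤ)).natAbs < a ∨
      min (p.1 - q.1) (p.2 - q.2) < b)

/-- The minimum `b`-excludant of a finite set `S = {s₁ < s₂ < … < sₗ}` of
nonnegative integers: `0` if `S = ∅`, and otherwise `sᵢ + b` where `i` is the
smallest index with `s_{i+1} - sᵢ > b` (with `s_{ℓ+1} = +∞`), i.e. `sᵢ` is the
smallest element of `S` followed by a gap larger than `b`. -/
noncomputable def mexb (b : ℕ) (S : Finset ℕ) : ℕ :=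
  if S.Nonempty then sInf {s : ℕ | s ∈ S ∧ ∀ t ∈ S, s < t → s + b < t} + b else 0

/-- The set `{x₀, y₀, …, x_{m-1}, y_{m-1}}` of the first `m` pairs of the
sequence of P-positions of WYT(a,b). -/
noncomputable def wytF (a b : ℕ) : ℕ → Finset ℕ
  | 0 => ∅
  | m + 1 => wytF a b m ∪ {mexb b (wytF a b m), mexb b (wytF a b m) + a * m}

/-- `x_m = mex_b {x₀, y₀, …, x_{m-1}, y_{m-1}}` (so `x₀ = 0`). -/
noncomputable def wytX (a b m : ℕ) : ℕ := mexb b (wytF a b m)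

/-- `y_m = x_m + a·m` (so `y₀ = 0`). -/
noncomputable def wytY (a b m : ℕ) : ℕ := wytX a b m + a * m

/-- The P-positions of WYT(a,b): the pairs `(x_m, y_m)` and `(y_m, x_m)`. -/
def WytP (a b : ℕ) (p : ℕ × ℕ) : Prop :=
  ∃ m : ℕ, p = (wytX a b m, wytY a b m) ∨ p = (wytY a b m, wytX a b m)

/-- From an N-position `(x,y)` of WYT(a,b) with `x ≤ y` and `y - x = aℓ + r`,
`0 ≤ r < a`, every diagonal move (one with `|ε - δ| < a`) to a P-position
lands in `(x_ℓ, y_ℓ)` or `(x_{ℓ+1}, y_{ℓ+1})`. -/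
theorem wyt_diagonal_moves (a b : ℕ) (ha : 0 < a) (hb : 0 < b)
    (x y l r : ℕ) (hxy : x ≤ y) (hN : ¬ WytP a b (x, y))
    (hlr : y - x = a * l + r) (hr : r < a)
    (q : ℕ × ℕ) (hmv : WytMove a b (x, y) q)
    (hdiag : (((x - q.1 : ℕ) : ℤ) - ((y - q.2 : ℕ) : ℤ)).natAbs < a)
    (hq : WytP a b q) :
    q = (wytX a b l, wytY a b l) ∨ q = (wytX a b (l + 1), wytY a b (l + 1)) := by
  obtain ⟨q₁, q₂⟩ := q
  obtain ⟨h₁, h₂, -, -⟩ := hmv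
  simp only at h₁ h₂ hdiag
  obtain ⟨m, hm | hm⟩ := hq
  · obtain ⟨rfl, rfl⟩ := Prod.mk.inj hm
    have hlow : a * l < a * (m + 1) := by
      rw [mul_add]
      simp only [wytY] at h₂ hdiag
      omega
    have hupp : a * m < a * (l + 2) := by
      rw [mul_add]
      simp only [wytY] at h₂ hdiag
      omega
    have hlm : l < m + 1 := lt_of_mul_lt_mul_left hlow ha.le
    have hml : m < l + 2 := lt_of_mul_lt_mul_left hupp ha.le
    obtain rfl | rfl : m = l ∨ m = l + 1 := by omega
    · exact Or.inl rfl
    · exact Or.inr rfl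
  · obtain ⟨rfl, rfl⟩ := Prod.mk.inj hm
    have hsum : a * (m + l) < a * 1 := by
      rw [mul_add]
      simp only [wytY] at h₁ hdiag
      omega
    have hml : m + l < 1 := lt_of_mul_lt_mul_left hsum ha.le
    obtain ⟨rfl, rfl⟩ : m = 0 ∧ l = 0 := by omega
    left
    simp [wytY]
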